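/- Let A be a finite index set and for each k ∈ {1,…,N} and a ∈ A let G_k^a be an operator on H_k; set G^a = Σ_{k=1}^N (extension of G_k^a to H) and D_k² = ‖Σ_{a∈A} (G_k^a)† G_k^a‖_∞. Then for every density matrix ρ on H, Σ_{a∈A} Var_ρ(G^a) ≤ ((1/N)·Σ_{k=1}^N D_k²) · (N + 2N²·√((1/N)·Σ_{k=1}^N s_k)). -/

import Mathlib

open scoped BigOperators Kronecker Matrix ComplexOrder

noncomputable section
namespace Paper

/-- A density matrix: a positive semidefinite operator of trace one. -/
def IsDensityMatrix {n : Type*} [Fintype n] (ρ : Matrix n n ℂ) : Prop :=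
  ρ.PosSemidef ∧ ρ.trace = 1

/-- The operator norm `‖A‖_∞` (largest singular value) of a matrix,
as the operator norm of the induced map on Euclidean space. -/
noncomputable def opNorm {n : Type*} [Fintype n] [DecidableEq n] (A : Matrix n n ℂ) : ℝ :=
  ‖LinearMap.toContinuousLinearMap (Matrix.toEuclideanLin A)‖

/-- Von Neumann entropy `−∑ λ ln λ` over the eigenvalues; since `Real.log 0 = 0`
in Mathlib, the convention `0 · ln 0 = 0` is automatic. -/
noncomputable def entropy {n : Type*} [Fintype n] [DecidableEq n] (σ : Matrix n n ℂ) : ℝ :=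
  if h : σ.IsHermitian then -∑ i, h.eigenvalues i * Real.log (h.eigenvalues i) else 0

/-- The variance `Var_ρ(A) = Tr[ρ A† A] − |Tr[ρ A]|²`. -/
noncomputable def variance {n : Type*} [Fintype n] (ρ A : Matrix n n ℂ) : ℝ :=
  (ρ * (Aᴴ * A)).trace.re - ‖(ρ * A).trace‖ ^ 2

/-- The trace norm `‖A‖₁ = Tr √(A†A)`: the sum of the singular values. -/
noncomputable def traceNorm {n : Type*} [Fintype n] [DecidableEq n] (A : Matrix n n ℂ) : ℝ :=
  ∑ i, Real.sqrt ((Matrix.posSemidef_conjTranspose_mul_self A).1.eigenvalues i)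

/-- The pure state `|v⟩⟨v|` associated with a vector `v`. -/
def pureState {n : Type*} (v : n → ℂ) : Matrix n n ℂ :=
  Matrix.of fun x y => v x * (starRingEnd ℂ) (v y)

/-- The expectation value `⟨v|M|v⟩`. -/
noncomputable def expval {n : Type*} [Fintype n] (M : Matrix n n ℂ) (v : n → ℂ) : ℂ :=
  ∑ x, ∑ y, (starRingEnd ℂ) (v x) * M x y * v y

variable {N : ℕ} {d : Fin N → Type*} [∀ k, Fintype (d k)] [∀ k, DecidableEq (d k)]

/-- Extension of a local operator on the `k`-th factor to the `N`-fold tensor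
product `H = H_1 ⊗ ⋯ ⊗ H_N`, tensoring with the identity on every other factor.
(The tensor product is realized with index set `∀ j, d j`.) -/
def extendAt (k : Fin N) (A : Matrix (d k) (d k) ℂ) : Matrix (∀ j, d j) (∀ j, d j) ℂ :=
  Matrix.of fun x y => if ∀ j, j ≠ k → x j = y j then A (x k) (y k) else 0

/-- Reduced density matrix on the `k`-th factor: partial trace over all other factors. -/
noncomputable def reduce (k : Fin N) (ρ : Matrix (∀ j, d j) (∀ j, d j) ℂ) :
    Matrix (d k) (d k) ℂ :=
  Matrix.of fun a b => ∑ x : ∀ j, d j, if x k = a then ρ x (Function.update x k b) else 0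

/-!
Write `Var_ρ(∑ k, G_k) = ∑ k l, Cov_ρ(G_k, G_l)`. The diagonal terms contribute at most
`∑ k, D_k²`.

For `k ≠ l`, let `P` be the projection onto a top eigenvector of `ρ_k`, with eigenvalue `p`, and
split `G_k = G_k (1 - P) + (1 - P) G_k P + P G_k P`. Since `P` commutes with `G_l`, and since
`P G_k P` is a multiple of `P`, which has variance at most `p (1 - p)`, the Cauchy–Schwarz
inequality for the covariance bounds the `(k, l)` term by `√(1 - p) (1 + 2√p) D_k D_l`. As `p` is
the largest eigenvalue, the entropy `s_k` satisfies both `1 - p ≤ s_k` and `h(p) ≤ s_k`,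
where `h` is the binary entropy; this turns the factor into `2√s_k`, or makes the trivial bound
`D_k D_l` sufficient. Exchanging `k` and `l` gives the same bound with `s_l`, and the AM–GM
inequality for `D_k D_l` followed by the concavity of `√` completes the proof.
-/

theorem sum_sqrt_le_card_mul_sqrt_avg {ι : Type*} [Fintype ι] {s : ι → ℝ} (hs : ∀ i, 0 ≤ s i) :
    ∑ i, √(s i) ≤ Fintype.card ι * √((1 / Fintype.card ι) * ∑ i, s i) :=
  calc ∑ i, √(s i)
      ≤ √(∑ i, s i) * √(Fintype.card ι) := by
        simpa using Real.sum_sqrt_mul_sqrt_le Finset.univ hs fun _ => zero_le_one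
    _ = Fintype.card ι / √(Fintype.card ι) * √(∑ i, s i) := by rw [Real.div_sqrt, mul_comm]
    _ = Fintype.card ι * √((1 / Fintype.card ι) * ∑ i, s i) := by
        rw [Real.sqrt_mul (by positivity), one_div, Real.sqrt_inv, ← mul_assoc, div_eq_mul_inv]

section Entropy

open Real

theorem mul_neg_log_le_negMulLog {x t : ℝ} (hx : 0 ≤ x) (hxt : x ≤ t) :
    x * -log t ≤ negMulLog x := by
  rcases hx.eq_or_lt with rfl | hx
  · simp
  · rw [negMulLog, neg_mul, ← mul_neg]
    gcongr

theorem mul_one_sub_le_negMulLog {x : ℝ} (hx : 0 ≤ x) : x * (1 - x) ≤ negMulLog x := by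
  rcases hx.eq_or_lt with rfl | hx
  · simp
  · rw [negMulLog, neg_mul, ← mul_neg]
    gcongr
    linarith [log_le_sub_one_of_pos hx]

theorem negMulLog_sum_le {ι : Type*} {s : Finset ι} {q : ι → ℝ} (hq : ∀ i ∈ s, 0 ≤ q i) :
    negMulLog (∑ i ∈ s, q i) ≤ ∑ i ∈ s, negMulLog (q i) := by
  rw [negMulLog, neg_mul, ← mul_neg, Finset.sum_mul]
  exact Finset.sum_le_sum fun i hi =>
    mul_neg_log_le_negMulLog (hq i hi) (Finset.single_le_sum hq hi)

section Distribution

variable {ι : Type*} [Fintype ι] {q : ι → ℝ} (hq : ∀ i, 0 ≤ q i) (hsum : ∑ i, q i = 1)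

include hq hsum

theorem binEntropy_le_sum_negMulLog (i : ι) : binEntropy (q i) ≤ ∑ j, negMulLog (q j) := by
  classical
  have hrest : ∑ j ∈ Finset.univ.erase i, q j = 1 - q i := by
    rw [← hsum, ← Finset.add_sum_erase _ _ (Finset.mem_univ i), add_sub_cancel_left]
  rw [binEntropy_eq_negMulLog_add_negMulLog_one_sub, ← hrest,
    ← Finset.add_sum_erase _ _ (Finset.mem_univ i)]
  gcongr
  exact negMulLog_sum_le fun j _ => hq j

theorem one_sub_le_sum_negMulLog {p : ℝ} (hp : ∀ i, q i ≤ p) : 1 - p ≤ ∑ i, negMulLog (q i) :=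
  calc 1 - p = ∑ i, q i * (1 - p) := by rw [← Finset.sum_mul, hsum, one_mul]
    _ ≤ ∑ i, q i * (1 - q i) := by
      gcongr with i
      · exact hq i
      · exact hp i
    _ ≤ ∑ i, negMulLog (q i) := Finset.sum_le_sum fun i _ => mul_one_sub_le_negMulLog (hq i)

-- The factor `5 + 4p` is an upper bound for `(1 + 2√p)²`.
theorem min_one_sub_mul_le_four_mul_sum_negMulLog {i : ι} (hmax : ∀ j, q j ≤ q i) :
    min 1 ((1 - q i) * (5 + 4 * q i)) ≤ 4 * ∑ j, negMulLog (q j) := by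
  have hone_sub := one_sub_le_sum_negMulLog hq hsum hmax
  rcases le_total (1 / 4) (1 - q i) with hlarge | hsmall
  · exact min_le_of_left_le (by linarith)
  · refine min_le_of_right_le ?_
    have hle_one : q i ≤ 1 := hsum ▸ Finset.single_le_sum (fun j _ => hq j) (Finset.mem_univ i)
    have hlog_four : 5 / 4 ≤ -log (1 / 4) := by
      rw [one_div, log_inv, neg_neg, show (4 : ℝ) = 2 ^ 2 by norm_num, log_pow]
      norm_num
      linarith [log_two_gt_d9]
    have hbin := binEntropy_le_sum_negMulLog hq hsum i
    rw [binEntropy_eq_negMulLog_add_negMulLog_one_sub] at hbin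
    have hmain : q i * (1 - q i) ≤ negMulLog (q i) := mul_one_sub_le_negMulLog (hq i)
    have hrest : (1 - q i) * (5 / 4) ≤ negMulLog (1 - q i) :=
      (mul_le_mul_of_nonneg_left hlog_four (sub_nonneg.2 hle_one)).trans
        (mul_neg_log_le_negMulLog (sub_nonneg.2 hle_one) hsmall)
    linarith

theorem min_sqrt_one_sub_mul_le_two_mul_sqrt_sum_negMulLog {i : ι} (hmax : ∀ j, q j ≤ q i) :
    min 1 (√(1 - q i) * (1 + 2 * √(q i))) ≤ 2 * √(∑ j, negMulLog (q j)) := by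
  have hle_one : q i ≤ 1 := hsum ▸ Finset.single_le_sum (fun j _ => hq j) (Finset.mem_univ i)
  have hsq : (√(1 - q i) * (1 + 2 * √(q i))) ^ 2 ≤ (1 - q i) * (5 + 4 * q i) := by
    have hsqrt : √(q i) ≤ 1 := sqrt_le_one.2 hle_one
    rw [mul_pow, sq_sqrt (sub_nonneg.2 hle_one)]
    refine mul_le_mul_of_nonneg_left ?_ (sub_nonneg.2 hle_one)
    linarith [sq_sqrt (hq i)]
  have htwo : 2 * √(∑ j, negMulLog (q j)) = √(4 * ∑ j, negMulLog (q j)) := by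
    rw [sqrt_mul zero_le_four, show (4 : ℝ) = 2 ^ 2 by norm_num, sqrt_sq zero_le_two]
  rw [htwo, min_le_iff]
  refine (min_le_iff.1 (min_one_sub_mul_le_four_mul_sum_negMulLog hq hsum hmax)).imp
    (fun h => one_le_sqrt.2 h) fun h => le_sqrt_of_sq_le (hsq.trans h)

end Distribution

variable {n : Type*} [Fintype n] [DecidableEq n] {σ : Matrix n n ℂ}

theorem entropy_eq_sum_negMulLog (hσ : σ.IsHermitian) :
    entropy σ = ∑ i, negMulLog (hσ.eigenvalues i) := by
  simp [entropy, hσ, negMulLog]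

theorem IsDensityMatrix.sum_eigenvalues (hσ : IsDensityMatrix σ) :
    ∑ i, hσ.1.1.eigenvalues i = 1 := by
  have h := hσ.1.1.trace_eq_sum_eigenvalues.symm.trans hσ.2
  simpa using congrArg Complex.re h

theorem IsDensityMatrix.entropy_nonneg (hσ : IsDensityMatrix σ) : 0 ≤ entropy σ := by
  rw [entropy_eq_sum_negMulLog hσ.1.1]
  simpa [hσ.sum_eigenvalues] using
    negMulLog_sum_le (s := Finset.univ) fun i _ => hσ.1.eigenvalues_nonneg i

theorem IsDensityMatrix.exists_eigenvector_min_le_two_mul_sqrt_entropy (hσ : IsDensityMatrix σ) :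
    ∃ (v : n → ℂ) (p : ℝ), star v ⬝ᵥ v = 1 ∧ σ *ᵥ v = (p : ℂ) • v ∧
      min 1 (√(1 - p) * (1 + 2 * √p)) ≤ 2 * √(entropy σ) := by
  have hH := hσ.1.1
  have : Nonempty n := by
    by_contra h
    have := not_nonempty_iff.1 h
    simpa using hσ.2
  obtain ⟨i, hmax⟩ := Finite.exists_max hH.eigenvalues
  refine ⟨(hH.eigenvectorBasis i).ofLp, hH.eigenvalues i, ?_, hH.mulVec_eigenvectorBasis i, ?_⟩
  · have h := inner_self_eq_norm_sq_to_K (𝕜 := ℂ) (hH.eigenvectorBasis i)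
    rw [EuclideanSpace.inner_eq_star_dotProduct, dotProduct_comm] at h
    simpa using h
  · rw [entropy_eq_sum_negMulLog hH]
    exact min_sqrt_one_sub_mul_le_two_mul_sqrt_sum_negMulLog hσ.1.eigenvalues_nonneg
      hσ.sum_eigenvalues hmax

end Entropy

section Trace

open scoped MatrixOrder

open scoped Matrix.Norms.L2Operator in
theorem le_opNorm_smul_one {n : Type*} [Fintype n] [DecidableEq n] {S : Matrix n n ℂ}
    (hS : S.IsHermitian) : S ≤ opNorm S • (1 : Matrix n n ℂ) := by
  have h : S ≤ algebraMap ℝ _ ‖S‖ := IsSelfAdjoint.le_algebraMap_norm_self (a := S) hS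
  rwa [Algebra.algebraMap_eq_smul_one] at h

variable {n ι : Type*} [Fintype n] [Fintype ι] {ρ : Matrix n n ℂ}

theorem trace_mul_conjTranspose (hρ : ρ.IsHermitian) (X : Matrix n n ℂ) :
    (ρ * Xᴴ).trace = star (ρ * X).trace := by
  rw [← Matrix.trace_conjTranspose, Matrix.conjTranspose_mul, hρ, Matrix.trace_mul_comm]

theorem norm_trace_mul_conjTranspose_mul_le (hρ : ρ.PosSemidef) (X Y : Matrix n n ℂ) :
    ‖(ρ * (Xᴴ * Y)).trace‖ ≤ √(ρ * (Xᴴ * X)).trace.re * √(ρ * (Yᴴ * Y)).trace.re := by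
  let := ρ.toMatrixSeminormedAddCommGroup hρ
  let := ρ.toMatrixInnerProductSpace hρ
  have hinner (Z W : Matrix n n ℂ) : (ρ * (Zᴴ * W)).trace = inner ℂ Z W := by
    rw [← Matrix.mul_assoc, Matrix.trace_mul_comm, ← Matrix.mul_assoc]
    rfl
  have hnorm (Z : Matrix n n ℂ) : √(ρ * (Zᴴ * Z)).trace.re = ‖Z‖ := by
    rw [hinner]
    exact (norm_eq_sqrt_re_inner (𝕜 := ℂ) Z).symm
  rw [hinner, hnorm, hnorm]
  exact norm_inner_le_norm X Y

theorem trace_mul_nonneg (hρ : ρ.PosSemidef) {K : Matrix n n ℂ} (hK : 0 ≤ K) :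
    0 ≤ (ρ * K).trace := by
  classical
  obtain ⟨R, rfl⟩ := CStarAlgebra.nonneg_iff_eq_star_mul_self.1 hρ.nonneg
  rw [Matrix.mul_assoc, Matrix.trace_mul_comm]
  exact ((Matrix.nonneg_iff_posSemidef.1 hK).mul_mul_conjTranspose_same R).trace_nonneg

theorem sum_norm_trace_mul_conjTranspose_mul_le (hρ : ρ.PosSemidef) {X Y : ι → Matrix n n ℂ}
    {D E : ℝ} (hX : ∑ a, (ρ * ((X a)ᴴ * X a)).trace.re ≤ D)
    (hY : ∑ a, (ρ * ((Y a)ᴴ * Y a)).trace.re ≤ E) :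
    ∑ a, ‖(ρ * ((X a)ᴴ * Y a)).trace‖ ≤ √D * √E := by
  have hnonneg (Z : Matrix n n ℂ) : 0 ≤ (ρ * (Zᴴ * Z)).trace.re :=
    (Complex.le_def.1 (trace_mul_nonneg hρ (star_mul_self_nonneg Z))).1
  calc ∑ a, ‖(ρ * ((X a)ᴴ * Y a)).trace‖
      ≤ ∑ a, √(ρ * ((X a)ᴴ * X a)).trace.re * √(ρ * ((Y a)ᴴ * Y a)).trace.re :=
        Finset.sum_le_sum fun a _ => norm_trace_mul_conjTranspose_mul_le hρ (X a) (Y a)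
    _ ≤ √(∑ a, (ρ * ((X a)ᴴ * X a)).trace.re) * √(∑ a, (ρ * ((Y a)ᴴ * Y a)).trace.re) :=
        Real.sum_sqrt_mul_sqrt_le _ (fun a => hnonneg (X a)) fun a => hnonneg (Y a)
    _ ≤ √D * √E := by gcongr

theorem re_trace_mul_le_re_trace_mul (hρ : ρ.PosSemidef) {K L : Matrix n n ℂ} (hKL : K ≤ L) :
    (ρ * K).trace.re ≤ (ρ * L).trace.re := by
  have h := trace_mul_nonneg hρ (sub_nonneg.2 hKL)
  rw [Matrix.mul_sub, Matrix.trace_sub, sub_nonneg] at h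
  exact (Complex.le_def.1 h).1

variable [DecidableEq n]

theorem sum_re_trace_mul_le (hρ : ρ.PosSemidef) {X : ι → Matrix n n ℂ} {D : ℝ}
    (hX : ∑ a, (X a)ᴴ * X a ≤ D • (1 : Matrix n n ℂ)) (M : Matrix n n ℂ) :
    ∑ a, (ρ * ((X a * M)ᴴ * (X a * M))).trace.re ≤ D * (ρ * (Mᴴ * M)).trace.re := by
  have h := re_trace_mul_le_re_trace_mul hρ (star_left_conjugate_le_conjugate hX M)
  simpa [Matrix.star_eq_conjTranspose, Matrix.mul_sum, Matrix.sum_mul, Matrix.trace_sum,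
    Matrix.mul_assoc] using h

end Trace

section Covariance

open scoped MatrixOrder

variable {n ι : Type*} [Fintype n] [Fintype ι]

/-- The covariance `Tr[ρ X† Y] − conj(Tr[ρ X]) Tr[ρ Y]` of two operators in the state `ρ`, the
sesquilinear form (conjugate-linear in `X`) whose diagonal is `variance ρ`. -/
def covariance (ρ X Y : Matrix n n ℂ) : ℂ :=
  (ρ * (Xᴴ * Y)).trace - star (ρ * X).trace * (ρ * Y).trace

theorem variance_eq_re_covariance (ρ X : Matrix n n ℂ) :
    variance ρ X = (covariance ρ X X).re := by
  rw [variance, covariance, Complex.sub_re, ← Complex.normSq_eq_norm_sq, Complex.star_def,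
    ← Complex.normSq_eq_conj_mul_self, Complex.ofReal_re]

theorem covariance_add_left (ρ X X' Y : Matrix n n ℂ) :
    covariance ρ (X + X') Y = covariance ρ X Y + covariance ρ X' Y := by
  simp only [covariance, Matrix.conjTranspose_add, Matrix.mul_add, Matrix.add_mul,
    Matrix.trace_add, star_add]
  ring

theorem covariance_sum_sum {κ : Type*} [Fintype κ] (ρ : Matrix n n ℂ)
    (X Y : κ → Matrix n n ℂ) :
    covariance ρ (∑ k, X k) (∑ l, Y l) = ∑ k, ∑ l, covariance ρ (X k) (Y l) := by
  simp only [covariance, Matrix.conjTranspose_sum, Matrix.trace_sum, star_sum, Finset.sum_mul_sum,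
    Matrix.mul_sum, Finset.sum_sub_distrib]

theorem sum_variance_sum_le_sum_sum_norm_covariance {κ : Type*} [Fintype κ]
    (ρ : Matrix n n ℂ) (X : ι → κ → Matrix n n ℂ) :
    ∑ a, variance ρ (∑ k, X a k) ≤ ∑ k, ∑ l, ∑ a, ‖covariance ρ (X a k) (X a l)‖ :=
  calc ∑ a, variance ρ (∑ k, X a k)
      = ∑ a, ∑ k, ∑ l, (covariance ρ (X a k) (X a l)).re := by
        simp only [variance_eq_re_covariance, covariance_sum_sum, Complex.re_sum]
    _ ≤ ∑ a, ∑ k, ∑ l, ‖covariance ρ (X a k) (X a l)‖ := by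
        gcongr
        exact Complex.re_le_norm _
    _ = ∑ k, ∑ l, ∑ a, ‖covariance ρ (X a k) (X a l)‖ := by
        rw [Finset.sum_comm]
        exact Finset.sum_congr rfl fun k _ => Finset.sum_comm

theorem variance_smul (ρ X : Matrix n n ℂ) (c : ℂ) :
    variance ρ (c • X) = ‖c‖ ^ 2 * variance ρ X := by
  simp only [variance, Matrix.conjTranspose_smul, smul_mul_smul_comm, Matrix.mul_smul,
    Matrix.trace_smul, norm_mul, smul_eq_mul, Complex.star_def,
    ← Complex.normSq_eq_conj_mul_self, Complex.re_ofReal_mul, Complex.normSq_eq_norm_sq]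
  ring

theorem variance_le_re_trace (ρ X : Matrix n n ℂ) :
    variance ρ X ≤ (ρ * (Xᴴ * X)).trace.re :=
  sub_le_self _ (sq_nonneg _)

theorem conjTranspose_mul_self_of_isStarProjection {P : Matrix n n ℂ}
    (hP : IsStarProjection P) : Pᴴ * P = P := by
  rw [← Matrix.star_eq_conjTranspose, hP.isSelfAdjoint.star_eq, hP.isIdempotentElem.eq]

theorem variance_le_of_isStarProjection (ρ : Matrix n n ℂ) {P : Matrix n n ℂ}
    (hP : IsStarProjection P) :
    variance ρ P ≤ (ρ * P).trace.re * (1 - (ρ * P).trace.re) := by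
  have hre : (ρ * P).trace.re ^ 2 ≤ ‖(ρ * P).trace‖ ^ 2 :=
    sq_le_sq.2 ((Complex.abs_re_le_norm _).trans (le_abs_self _))
  rw [variance, conjTranspose_mul_self_of_isStarProjection hP]
  linarith

theorem norm_covariance_comm {ρ : Matrix n n ℂ} (hρ : ρ.IsHermitian) (X Y : Matrix n n ℂ) :
    ‖covariance ρ X Y‖ = ‖covariance ρ Y X‖ := by
  have hstar : star (covariance ρ Y X) = covariance ρ X Y := by
    simp only [covariance, star_sub, ← trace_mul_conjTranspose hρ, star_mul',
      Matrix.conjTranspose_mul, Matrix.conjTranspose_conjTranspose]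
    ring
  rw [← hstar, norm_star]

variable {ρ : Matrix n n ℂ}

theorem covariance_eq_trace_centered [DecidableEq n] (hρ : IsDensityMatrix ρ)
    (X Y : Matrix n n ℂ) :
    covariance ρ X Y =
      (ρ * ((X - (ρ * X).trace • 1)ᴴ * (Y - (ρ * Y).trace • 1))).trace := by
  simp [covariance, Matrix.mul_sub, Matrix.sub_mul, trace_mul_conjTranspose hρ.1.1, hρ.2]

theorem variance_nonneg (hρ : IsDensityMatrix ρ) (X : Matrix n n ℂ) : 0 ≤ variance ρ X := by
  classical
  rw [variance_eq_re_covariance, covariance_eq_trace_centered hρ]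
  exact (Complex.le_def.1 (trace_mul_nonneg hρ.1 (star_mul_self_nonneg _))).1

theorem sum_norm_covariance_le (hρ : IsDensityMatrix ρ) {X Y : ι → Matrix n n ℂ} {D E : ℝ}
    (hX : ∑ a, variance ρ (X a) ≤ D) (hY : ∑ a, variance ρ (Y a) ≤ E) :
    ∑ a, ‖covariance ρ (X a) (Y a)‖ ≤ √D * √E := by
  classical
  simp only [variance_eq_re_covariance, covariance_eq_trace_centered hρ] at hX hY ⊢
  exact sum_norm_trace_mul_conjTranspose_mul_le hρ.1 hX hY

theorem sum_norm_covariance_smul_le (hρ : IsDensityMatrix ρ) {Y : ι → Matrix n n ℂ} {α : ι → ℂ}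
    {D E : ℝ} (hα : ∑ a, ‖α a‖ ^ 2 ≤ D) (hY : ∑ a, variance ρ (Y a) ≤ E) (Z : Matrix n n ℂ) :
    ∑ a, ‖covariance ρ (α a • Z) (Y a)‖ ≤ √(D * variance ρ Z) * √E := by
  refine sum_norm_covariance_le hρ ?_ hY
  simp only [variance_smul, ← Finset.sum_mul]
  exact mul_le_mul_of_nonneg_right hα (variance_nonneg hρ Z)

variable [DecidableEq n] {D E : ℝ}

theorem sum_variance_le (hρ : IsDensityMatrix ρ) {X : ι → Matrix n n ℂ}
    (hX : ∑ a, (X a)ᴴ * X a ≤ D • (1 : Matrix n n ℂ)) : ∑ a, variance ρ (X a) ≤ D :=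
  calc ∑ a, variance ρ (X a)
      ≤ ∑ a, (ρ * ((X a)ᴴ * X a)).trace.re :=
        Finset.sum_le_sum fun a _ => variance_le_re_trace ρ (X a)
    _ ≤ D := by simpa [hρ.2] using sum_re_trace_mul_le hρ.1 hX 1

theorem sum_norm_trace_sq_le (hρ : IsDensityMatrix ρ) {X : ι → Matrix n n ℂ}
    (hX : ∑ a, (X a)ᴴ * X a ≤ D • (1 : Matrix n n ℂ)) :
    ∑ a, ‖(ρ * X a).trace‖ ^ 2 ≤ D :=
  calc ∑ a, ‖(ρ * X a).trace‖ ^ 2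
      ≤ ∑ a, (ρ * ((X a)ᴴ * X a)).trace.re :=
        Finset.sum_le_sum fun a _ => sub_nonneg.1 (variance_nonneg hρ (X a))
    _ ≤ D := by simpa [hρ.2] using sum_re_trace_mul_le hρ.1 hX 1

theorem nonneg_of_sum_conjTranspose_mul_le (hρ : IsDensityMatrix ρ) {X : ι → Matrix n n ℂ}
    (hX : ∑ a, (X a)ᴴ * X a ≤ D • (1 : Matrix n n ℂ)) : 0 ≤ D :=
  (Finset.sum_nonneg fun a _ => variance_nonneg hρ (X a)).trans (sum_variance_le hρ hX)

variable {P : Matrix n n ℂ}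

theorem covariance_compression_left {X Y : Matrix n n ℂ} (hP : IsStarProjection P)
    (hPY : Commute P Y) (hmean : (ρ * ((1 - P) * X * P)).trace = 0) :
    covariance ρ ((1 - P) * X * P) Y = (ρ * ((X * P)ᴴ * (Y * (1 - P)))).trace := by
  have hstar : (1 - P)ᴴ = 1 - P := hP.one_sub.isSelfAdjoint
  have hcomm : (1 - P) * Y = Y * (1 - P) := ((Commute.one_left Y).sub_left hPY).eq
  rw [covariance, hmean, star_zero, zero_mul, sub_zero, Matrix.mul_assoc (1 - P),
    Matrix.conjTranspose_mul, hstar, Matrix.mul_assoc, hcomm]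

theorem sum_norm_covariance_mul_right_le (hρ : IsDensityMatrix ρ) {X Y : ι → Matrix n n ℂ}
    (hX : ∑ a, (X a)ᴴ * X a ≤ D • (1 : Matrix n n ℂ)) (hY : ∑ a, variance ρ (Y a) ≤ E)
    (M : Matrix n n ℂ) :
    ∑ a, ‖covariance ρ (X a * M) (Y a)‖ ≤ √(D * (ρ * (Mᴴ * M)).trace.re) * √E :=
  sum_norm_covariance_le hρ
    ((Finset.sum_le_sum fun a _ => variance_le_re_trace ρ (X a * M)).trans
      (sum_re_trace_mul_le hρ.1 hX M)) hY

theorem sum_norm_covariance_compression_le (hρ : IsDensityMatrix ρ) {X Y : ι → Matrix n n ℂ}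
    (hX : ∑ a, (X a)ᴴ * X a ≤ D • (1 : Matrix n n ℂ))
    (hY : ∑ a, (Y a)ᴴ * Y a ≤ E • (1 : Matrix n n ℂ)) (hP : IsStarProjection P)
    (hPY : ∀ a, Commute P (Y a)) (hmean : ∀ a, (ρ * ((1 - P) * X a * P)).trace = 0) :
    ∑ a, ‖covariance ρ ((1 - P) * X a * P) (Y a)‖ ≤
      √(D * (ρ * P).trace.re) * √(E * (ρ * (1 - P)).trace.re) := by
  simp only [covariance_compression_left hP (hPY _) (hmean _)]
  exact sum_norm_trace_mul_conjTranspose_mul_le hρ.1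
    (by simpa only [conjTranspose_mul_self_of_isStarProjection hP] using
      sum_re_trace_mul_le hρ.1 hX P)
    (by simpa only [conjTranspose_mul_self_of_isStarProjection hP.one_sub] using
      sum_re_trace_mul_le hρ.1 hY (1 - P))

theorem sum_norm_covariance_le_of_isStarProjection (hρ : IsDensityMatrix ρ)
    {X Y : ι → Matrix n n ℂ} {α : ι → ℂ} {p : ℝ}
    (hX : ∑ a, (X a)ᴴ * X a ≤ D • (1 : Matrix n n ℂ))
    (hY : ∑ a, (Y a)ᴴ * Y a ≤ E • (1 : Matrix n n ℂ)) (hP : IsStarProjection P)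
    (hp : (ρ * P).trace.re = p) (hPY : ∀ a, Commute P (Y a)) (hPX : ∀ a, P * X a * P = α a • P)
    (hα : ∑ a, ‖α a‖ ^ 2 ≤ D) (hmean : ∀ a, (ρ * ((1 - P) * X a * P)).trace = 0) :
    ∑ a, ‖covariance ρ (X a) (Y a)‖ ≤ √(1 - p) * (1 + 2 * √p) * (√D * √E) := by
  have hp_nonneg : 0 ≤ p := hp ▸ (Complex.le_def.1 (trace_mul_nonneg hρ.1 hP.nonneg)).1
  have hq : (ρ * (1 - P)).trace.re = 1 - p := by simp [mul_sub, hρ.2, hp]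
  have hq_nonneg : 0 ≤ 1 - p :=
    hq ▸ (Complex.le_def.1 (trace_mul_nonneg hρ.1 hP.one_sub.nonneg)).1
  have hvarY := sum_variance_le hρ hY
  have hsplit (a : ι) : X a = X a * (1 - P) + (1 - P) * X a * P + α a • P := by
    rw [← hPX]
    noncomm_ring
  have hright : ∑ a, ‖covariance ρ (X a * (1 - P)) (Y a)‖ ≤ √(D * (1 - p)) * √E := by
    simpa only [conjTranspose_mul_self_of_isStarProjection hP.one_sub, hq] using
      sum_norm_covariance_mul_right_le hρ hX hvarY (1 - P)
  have hcorner : ∑ a, ‖covariance ρ ((1 - P) * X a * P) (Y a)‖ ≤ √(D * p) * √(E * (1 - p)) := by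
    simpa only [hp, hq] using sum_norm_covariance_compression_le hρ hX hY hP hPY hmean
  have hdiag : ∑ a, ‖covariance ρ (α a • P) (Y a)‖ ≤ √(D * (p * (1 - p))) * √E := by
    refine (sum_norm_covariance_smul_le hρ hα hvarY P).trans ?_
    have hD : 0 ≤ D := nonneg_of_sum_conjTranspose_mul_le hρ hX
    gcongr
    exact hp ▸ variance_le_of_isStarProjection ρ hP
  calc ∑ a, ‖covariance ρ (X a) (Y a)‖
      = ∑ a, ‖covariance ρ (X a * (1 - P)) (Y a) + covariance ρ ((1 - P) * X a * P) (Y a) +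
          covariance ρ (α a • P) (Y a)‖ := by
        simp only [← covariance_add_left, ← hsplit]
    _ ≤ ∑ a, ‖covariance ρ (X a * (1 - P)) (Y a)‖ +
          ∑ a, ‖covariance ρ ((1 - P) * X a * P) (Y a)‖ +
          ∑ a, ‖covariance ρ (α a • P) (Y a)‖ := by
        simp only [← Finset.sum_add_distrib]
        exact Finset.sum_le_sum fun a _ => norm_add₃_le
    _ ≤ √(D * (1 - p)) * √E + √(D * p) * √(E * (1 - p)) + √(D * (p * (1 - p))) * √E := by
        gcongr
    _ = √(1 - p) * (1 + 2 * √p) * (√D * √E) := by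
        simp only [Real.sqrt_mul' _ hq_nonneg, Real.sqrt_mul' _ hp_nonneg,
          Real.sqrt_mul' _ (mul_nonneg hp_nonneg hq_nonneg)]
        ring

end Covariance

section PureState

variable {n : Type*}

theorem pureState_eq_vecMulVec (v : n → ℂ) : pureState v = Matrix.vecMulVec v (star v) := rfl

theorem posSemidef_pureState [Finite n] (v : n → ℂ) : (pureState v).PosSemidef :=
  Matrix.posSemidef_vecMulVec_self_star v

variable [Fintype n] {v : n → ℂ}

theorem trace_mul_pureState (M : Matrix n n ℂ) (v : n → ℂ) :
    (M * pureState v).trace = star v ⬝ᵥ M *ᵥ v := by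
  rw [pureState_eq_vecMulVec, Matrix.mul_vecMulVec, Matrix.trace_vecMulVec, dotProduct_comm]

theorem isDensityMatrix_pureState (hv : star v ⬝ᵥ v = 1) : IsDensityMatrix (pureState v) := by
  refine ⟨posSemidef_pureState v, ?_⟩
  rw [pureState_eq_vecMulVec, Matrix.trace_vecMulVec, dotProduct_comm, hv]

theorem pureState_mul_mul_pureState (M : Matrix n n ℂ) (v : n → ℂ) :
    pureState v * M * pureState v = (pureState v * M).trace • pureState v := by
  rw [Matrix.trace_mul_comm, trace_mul_pureState, pureState_eq_vecMulVec, Matrix.vecMulVec_mul,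
    Matrix.vecMulVec_mul_vecMulVec, Matrix.vecMulVec_smul, Matrix.dotProduct_mulVec]

theorem isStarProjection_pureState (hv : star v ⬝ᵥ v = 1) : IsStarProjection (pureState v) := by
  classical
  refine ⟨?_, (posSemidef_pureState v).1⟩
  have h := pureState_mul_mul_pureState 1 v
  rwa [mul_one, (isDensityMatrix_pureState hv).2, one_smul] at h

theorem pureState_mul_of_mulVec_eq_smul {σ : Matrix n n ℂ} (hσ : σ.IsHermitian) {p : ℝ}
    (hp : σ *ᵥ v = (p : ℂ) • v) : pureState v * σ = (p : ℂ) • pureState v := by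
  have hp' : star v ᵥ* σ = (p : ℂ) • star v := by
    rw [← hσ.eq, ← Matrix.star_mulVec, hp]
    simp
  rw [pureState_eq_vecMulVec, Matrix.vecMulVec_mul, hp', Matrix.vecMulVec_smul]

end PureState

section Extension

open scoped MatrixOrder

omit [∀ k, Fintype (d k)] in
theorem extendAt_conjTranspose (k : Fin N) (A : Matrix (d k) (d k) ℂ) :
    extendAt k Aᴴ = (extendAt k A)ᴴ := by
  ext x y
  simp only [extendAt, Matrix.of_apply, Matrix.conjTranspose_apply, eq_comm (a := x _),
    apply_ite star, star_zero]

theorem extendAt_apply_eq_sum (k : Fin N) (A : Matrix (d k) (d k) ℂ) (x y : ∀ j, d j) :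
    extendAt k A x y = ∑ b, if Function.update x k b = y then A (x k) b else 0 := by
  simp [extendAt, Function.update_eq_iff, ite_and]

theorem extendAt_mul_apply (k : Fin N) (A : Matrix (d k) (d k) ℂ)
    (M : Matrix (∀ j, d j) (∀ j, d j) ℂ) (x y : ∀ j, d j) :
    (extendAt k A * M) x y = ∑ b, A (x k) b * M (Function.update x k b) y := by
  simp only [Matrix.mul_apply, extendAt_apply_eq_sum, Finset.sum_mul, ite_mul, zero_mul]
  rw [Finset.sum_comm]
  simp

/-- `extendAt k` as a unital star-algebra homomorphism. -/
def extendAtHom (k : Fin N) : Matrix (d k) (d k) ℂ →⋆ₐ[ℂ] Matrix (∀ j, d j) (∀ j, d j) ℂ where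
  toFun := extendAt k
  map_one' := by
    ext x y
    rw [extendAt_apply_eq_sum, Fintype.sum_eq_single (x k) fun b hb => by simp [hb.symm]]
    simp [Matrix.one_apply]
  map_mul' A B := by
    ext x y
    simp only [extendAt_mul_apply, extendAt_apply_eq_sum, Function.update_idem,
      Function.update_self, Finset.mul_sum, mul_ite, mul_zero]
    rw [Finset.sum_comm]
    simp [Matrix.mul_apply, Finset.sum_ite_irrel]
  map_zero' := by
    ext x y
    simp [extendAt]
  map_add' A B := by
    ext x y
    simp [extendAt, ite_add_ite]
  commutes' c := by
    ext x y
    rw [extendAt_apply_eq_sum, Fintype.sum_eq_single (x k) fun b hb => by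
      simp [Matrix.algebraMap_matrix_apply, hb.symm]]
    simp [Matrix.algebraMap_matrix_apply]
  map_star' := extendAt_conjTranspose k

@[simp]
theorem extendAtHom_apply (k : Fin N) (A : Matrix (d k) (d k) ℂ) :
    extendAtHom k A = extendAt k A := rfl

theorem mul_extendAt_apply (k : Fin N) (A : Matrix (d k) (d k) ℂ)
    (M : Matrix (∀ j, d j) (∀ j, d j) ℂ) (x y : ∀ j, d j) :
    (M * extendAt k A) x y = ∑ b, M x (Function.update y k b) * A b (y k) := by
  have h : M * extendAt k A = (extendAt k Aᴴ * Mᴴ)ᴴ := by simp [extendAt_conjTranspose]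
  simp [h, extendAt_mul_apply, mul_comm]

theorem commute_extendAt {k l : Fin N} (hkl : k ≠ l) (A : Matrix (d k) (d k) ℂ)
    (B : Matrix (d l) (d l) ℂ) : Commute (extendAt k A) (extendAt l B) := by
  refine Matrix.ext fun x y => ?_
  simp only [extendAt_mul_apply, extendAt_apply_eq_sum, Finset.mul_sum, mul_ite, mul_zero]
  rw [Finset.sum_comm]
  refine Finset.sum_congr rfl fun c _ => Finset.sum_congr rfl fun b _ => ?_
  rw [Function.update_of_ne hkl.symm, Function.update_of_ne hkl, Function.update_comm hkl, mul_comm]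

theorem trace_mul_extendAt (k : Fin N) (ρ : Matrix (∀ j, d j) (∀ j, d j) ℂ)
    (A : Matrix (d k) (d k) ℂ) : (ρ * extendAt k A).trace = (reduce k ρ * A).trace := by
  calc (ρ * extendAt k A).trace
      = ∑ b, ∑ x, ρ x (Function.update x k b) * A b (x k) := by
        simp only [Matrix.trace, Matrix.diag_apply, mul_extendAt_apply]
        exact Finset.sum_comm
    _ = ∑ b, ∑ x, ∑ a, (if x k = a then ρ x (Function.update x k b) else 0) * A b a := by
        simp only [ite_mul, zero_mul, Finset.sum_ite_eq, Finset.mem_univ, if_true]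
    _ = ∑ b, ∑ a, reduce k ρ a b * A b a := by
        simp only [reduce, Matrix.of_apply, Finset.sum_mul]
        exact Finset.sum_congr rfl fun b _ => Finset.sum_comm
    _ = (reduce k ρ * A).trace := by
        simp only [Matrix.trace, Matrix.diag_apply, Matrix.mul_apply]
        exact Finset.sum_comm

theorem sum_conjTranspose_extendAt_mul_le {ι : Type*} [Fintype ι] {k : Fin N}
    {X : ι → Matrix (d k) (d k) ℂ} {D : ℝ}
    (hX : ∑ a, (X a)ᴴ * X a ≤ D • (1 : Matrix (d k) (d k) ℂ)) :
    ∑ a, (extendAt k (X a))ᴴ * extendAt k (X a) ≤ D • (1 : Matrix (∀ j, d j) (∀ j, d j) ℂ) := by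
  have h := OrderHomClass.mono (extendAtHom k) hX
  rw [← Complex.coe_smul, map_smul, Complex.coe_smul, map_one, map_sum] at h
  simpa only [← Matrix.star_eq_conjTranspose, map_mul, map_star, extendAtHom_apply] using h

end Extension

section Marginal

open scoped MatrixOrder

variable {ρ : Matrix (∀ j, d j) (∀ j, d j) ℂ}

theorem isHermitian_reduce (hρ : ρ.IsHermitian) (k : Fin N) : (reduce k ρ).IsHermitian := by
  refine Matrix.ext_iff_trace_mul_right.2 fun A => ?_
  have h : (reduce k ρ)ᴴ * A = (Aᴴ * reduce k ρ)ᴴ := by simp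
  rw [h, Matrix.trace_conjTranspose, Matrix.trace_mul_comm, ← trace_mul_extendAt,
    extendAt_conjTranspose, trace_mul_conjTranspose hρ, star_star, trace_mul_extendAt]

theorem posSemidef_reduce (hρ : ρ.PosSemidef) (k : Fin N) : (reduce k ρ).PosSemidef := by
  refine .of_dotProduct_mulVec_nonneg (isHermitian_reduce hρ.1 k) fun v => ?_
  rw [← trace_mul_pureState, ← trace_mul_extendAt]
  exact trace_mul_nonneg hρ (map_nonneg (extendAtHom k) (posSemidef_pureState v).nonneg)

theorem trace_reduce (k : Fin N) (ρ : Matrix (∀ j, d j) (∀ j, d j) ℂ) :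
    (reduce k ρ).trace = ρ.trace := by
  simpa [map_one (extendAtHom k), ← extendAtHom_apply] using (trace_mul_extendAt k ρ 1).symm

protected theorem IsDensityMatrix.reduce (hρ : IsDensityMatrix ρ) (k : Fin N) :
    IsDensityMatrix (reduce k ρ) :=
  ⟨posSemidef_reduce hρ.1 k, (trace_reduce k ρ).trans hρ.2⟩

variable {ι : Type*} [Fintype ι] {k l : Fin N} {D E : ℝ}

theorem sum_norm_covariance_extendAt_le_of_mulVec_eq_smul (hρ : IsDensityMatrix ρ) (hkl : k ≠ l)
    {X : ι → Matrix (d k) (d k) ℂ} {Y : ι → Matrix (d l) (d l) ℂ}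
    (hX : ∑ a, (X a)ᴴ * X a ≤ D • (1 : Matrix (d k) (d k) ℂ))
    (hY : ∑ a, (Y a)ᴴ * Y a ≤ E • (1 : Matrix (d l) (d l) ℂ)) {v : d k → ℂ}
    (hv : star v ⬝ᵥ v = 1) {p : ℝ} (hp : reduce k ρ *ᵥ v = (p : ℂ) • v) :
    ∑ a, ‖covariance ρ (extendAt k (X a)) (extendAt l (Y a))‖ ≤
      √(1 - p) * (1 + 2 * √p) * (√D * √E) := by
  have hP := isStarProjection_pureState hv
  have hPσ := pureState_mul_of_mulVec_eq_smul (hρ.reduce k).1.1 hp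
  refine sum_norm_covariance_le_of_isStarProjection hρ (P := extendAt k (pureState v))
    (α := fun a => (pureState v * X a).trace) (sum_conjTranspose_extendAt_mul_le hX)
    (sum_conjTranspose_extendAt_mul_le hY) (hP.map (extendAtHom k)) ?_
    (fun a => commute_extendAt hkl _ (Y a)) (fun a => ?_)
    (sum_norm_trace_sq_le (isDensityMatrix_pureState hv) hX) fun a => ?_
  · rw [trace_mul_extendAt, Matrix.trace_mul_comm, hPσ, Matrix.trace_smul,
      (isDensityMatrix_pureState hv).2, smul_eq_mul, mul_one, Complex.ofReal_re]
  · simp only [← extendAtHom_apply, ← map_mul, ← map_smul, pureState_mul_mul_pureState]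
  · have hcorner : (1 - extendAt k (pureState v)) * extendAt k (X a) * extendAt k (pureState v) =
        extendAt k ((1 - pureState v) * X a * pureState v) := by
      simp only [← extendAtHom_apply, map_mul, map_sub, map_one]
    rw [hcorner, trace_mul_extendAt, Matrix.trace_mul_comm, Matrix.mul_assoc, hPσ,
      Matrix.mul_smul, Matrix.trace_smul, Matrix.trace_mul_comm, ← Matrix.mul_assoc,
      hP.mul_one_sub_self, zero_mul, Matrix.trace_zero, smul_zero]

theorem sum_norm_covariance_extendAt_le (hρ : IsDensityMatrix ρ) (hkl : k ≠ l)
    {X : ι → Matrix (d k) (d k) ℂ} {Y : ι → Matrix (d l) (d l) ℂ}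
    (hX : ∑ a, (X a)ᴴ * X a ≤ D • (1 : Matrix (d k) (d k) ℂ))
    (hY : ∑ a, (Y a)ᴴ * Y a ≤ E • (1 : Matrix (d l) (d l) ℂ)) :
    ∑ a, ‖covariance ρ (extendAt k (X a)) (extendAt l (Y a))‖ ≤
      2 * √(entropy (reduce k ρ)) * (√D * √E) := by
  obtain ⟨v, p, hv, hp, hentropy⟩ :=
    (hρ.reduce k).exists_eigenvector_min_le_two_mul_sqrt_entropy
  refine le_trans ?_ (mul_le_mul_of_nonneg_right hentropy (by positivity))
  rw [min_mul_of_nonneg _ _ (by positivity), one_mul]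
  exact le_min
    (sum_norm_covariance_le hρ (sum_variance_le hρ (sum_conjTranspose_extendAt_mul_le hX))
      (sum_variance_le hρ (sum_conjTranspose_extendAt_mul_le hY)))
    (sum_norm_covariance_extendAt_le_of_mulVec_eq_smul hρ hkl hX hY hv hp)

theorem sum_norm_covariance_extendAt_le_add (hρ : IsDensityMatrix ρ) (hkl : k ≠ l)
    {X : ι → Matrix (d k) (d k) ℂ} {Y : ι → Matrix (d l) (d l) ℂ}
    (hX : ∑ a, (X a)ᴴ * X a ≤ D • (1 : Matrix (d k) (d k) ℂ))
    (hY : ∑ a, (Y a)ᴴ * Y a ≤ E • (1 : Matrix (d l) (d l) ℂ)) :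
    ∑ a, ‖covariance ρ (extendAt k (X a)) (extendAt l (Y a))‖ ≤
      D * √(entropy (reduce l ρ)) + E * √(entropy (reduce k ρ)) := by
  have hD : 0 ≤ D := nonneg_of_sum_conjTranspose_mul_le (hρ.reduce k) hX
  have hE : 0 ≤ E := nonneg_of_sum_conjTranspose_mul_le (hρ.reduce l) hY
  have hk := sum_norm_covariance_extendAt_le hρ hkl hX hY
  have hl := sum_norm_covariance_extendAt_le hρ hkl.symm hY hX
  simp only [norm_covariance_comm hρ.1.1 (extendAt l _)] at hl
  have hamgm : 2 * (√D * √E) ≤ D + E := by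
    simpa [Real.sq_sqrt hD, Real.sq_sqrt hE, mul_assoc] using two_mul_le_add_sq √D √E
  set C := ∑ a, ‖covariance ρ (extendAt k (X a)) (extendAt l (Y a))‖
  set u := √(entropy (reduce k ρ))
  set w := √(entropy (reduce l ρ))
  have hmin : 0 ≤ min u w := le_min (Real.sqrt_nonneg _) (Real.sqrt_nonneg _)
  calc C ≤ min u w * (2 * (√D * √E)) := by
        rw [min_mul_of_nonneg _ _ (by positivity)]
        exact le_min (by linarith) (by linarith)
    _ ≤ min u w * (D + E) := mul_le_mul_of_nonneg_left hamgm hmin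
    _ = D * min u w + E * min u w := by ring
    _ ≤ D * w + E * u := by
        gcongr
        · exact min_le_right u w
        · exact min_le_left u w

theorem sum_norm_covariance_extendAt_self_le (hρ : IsDensityMatrix ρ)
    {X : ι → Matrix (d k) (d k) ℂ}
    (hX : ∑ a, (X a)ᴴ * X a ≤ D • (1 : Matrix (d k) (d k) ℂ)) :
    ∑ a, ‖covariance ρ (extendAt k (X a)) (extendAt k (X a))‖ ≤ D := by
  have hvar := sum_variance_le hρ (sum_conjTranspose_extendAt_mul_le hX)
  exact (sum_norm_covariance_le hρ hvar hvar).trans_eq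
    (Real.mul_self_sqrt (nonneg_of_sum_conjTranspose_mul_le (hρ.reduce k) hX))

theorem sum_variance_sum_extendAt_le (hρ : IsDensityMatrix ρ)
    {X : ι → ∀ k, Matrix (d k) (d k) ℂ} {D : Fin N → ℝ}
    (hX : ∀ k, ∑ a, (X a k)ᴴ * X a k ≤ D k • (1 : Matrix (d k) (d k) ℂ)) :
    ∑ a, variance ρ (∑ k, extendAt k (X a k)) ≤
      (∑ k, D k) * (1 + 2 * ∑ k, √(entropy (reduce k ρ))) := by
  let u (k : Fin N) : ℝ := √(entropy (reduce k ρ))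
  have hentry (k l : Fin N) :
      ∑ a, ‖covariance ρ (extendAt k (X a k)) (extendAt l (X a l))‖ ≤
        (if k = l then D k else 0) + (D k * u l + D l * u k) := by
    split_ifs with hkl
    · subst hkl
      have hD : 0 ≤ D k := nonneg_of_sum_conjTranspose_mul_le (hρ.reduce k) (hX k)
      exact (sum_norm_covariance_extendAt_self_le hρ (hX k)).trans
        (le_add_of_nonneg_right (by positivity))
    · rw [zero_add]
      exact sum_norm_covariance_extendAt_le_add hρ hkl (hX k) (hX l)
  calc ∑ a, variance ρ (∑ k, extendAt k (X a k))
      ≤ ∑ k, ∑ l, ∑ a, ‖covariance ρ (extendAt k (X a k)) (extendAt l (X a l))‖ :=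
        sum_variance_sum_le_sum_sum_norm_covariance ρ fun a k => extendAt k (X a k)
    _ ≤ ∑ k, ∑ l, ((if k = l then D k else 0) + (D k * u l + D l * u k)) := by
        gcongr
        exact hentry _ _
    _ = (∑ k, D k) * (1 + 2 * ∑ k, u k) := by
        simp only [Finset.sum_add_distrib, Finset.sum_ite_eq, Finset.mem_univ, if_true,
          ← Finset.mul_sum, ← Finset.sum_mul]
        ring

end Marginal

/-- Lemma 1b of the paper. For a finite index set `A` and operators
`G_k^a` on `H_k`, with `G^a = Σ_k (extension of G_k^a to H)` and
`D_k² = ‖Σ_a (G_k^a)† G_k^a‖_∞`, every density matrix `ρ` on `H` satisfies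
`Σ_a Var_ρ(G^a) ≤ ((1/N)·Σ_k D_k²) · (N + 2N²·√((1/N)·Σ_k s_k))`. -/
theorem sum_variance_le_avg_D_sq_mul_entropy_factor
    [∀ k, Nonempty (d k)] (hN : 1 ≤ N)
    {A : Type*} [Fintype A] (G : A → ∀ k, Matrix (d k) (d k) ℂ)
    (ρ : Matrix (∀ j, d j) (∀ j, d j) ℂ) (hρ : IsDensityMatrix ρ) :
    ∑ a, variance ρ (∑ k, extendAt k (G a k)) ≤
      ((1 / (N : ℝ)) * ∑ k, opNorm (∑ a, (G a k)ᴴ * G a k)) *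
        ((N : ℝ) + 2 * (N : ℝ) ^ 2 *
          Real.sqrt ((1 / (N : ℝ)) * ∑ k, entropy (reduce k ρ))) := by
  have hN_ne : (N : ℝ) ≠ 0 := Nat.cast_ne_zero.2 (Nat.one_le_iff_ne_zero.1 hN)
  have hD (k : Fin N) := le_opNorm_smul_one (Matrix.posSemidef_sum Finset.univ fun a _ =>
    Matrix.posSemidef_conjTranspose_mul_self (G a k)).1
  have hjensen : ∑ k, √(entropy (reduce k ρ)) ≤
      N * √((1 / (N : ℝ)) * ∑ k, entropy (reduce k ρ)) := by
    simpa using sum_sqrt_le_card_mul_sqrt_avg fun k => (hρ.reduce k).entropy_nonneg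
  have hDsum : 0 ≤ ∑ k, opNorm (∑ a, (G a k)ᴴ * G a k) :=
    Finset.sum_nonneg fun k _ => norm_nonneg _
  calc ∑ a, variance ρ (∑ k, extendAt k (G a k))
      ≤ (∑ k, opNorm (∑ a, (G a k)ᴴ * G a k)) * (1 + 2 * ∑ k, √(entropy (reduce k ρ))) :=
        sum_variance_sum_extendAt_le hρ hD
    _ ≤ (∑ k, opNorm (∑ a, (G a k)ᴴ * G a k)) *
          (1 + 2 * (N * √((1 / (N : ℝ)) * ∑ k, entropy (reduce k ρ)))) := by gcongr
    _ = _ := by field_simp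

end Paper
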